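/- arXiv:2010.00911 — 7 statements merged into one kernel-verified Lean document; each statement's English description precedes it below -/
import Mathlib

section
/- Lemma 5.1 (forepassed lemma). Suppose the reachability predicate R is single-step compatible with the extend relation E, and every write in the execution (at each time in (t⋆, T]) satisfies the forepassed condition w.r.t. R and E. Then for every t with t⋆ ≤ t ≤ T, every t' with t ≤ t' ≤ T, and all locations ℓ, ℓ': if R σ_t ℓ holds and E ℓ (σ_{t'} ℓ) ℓ' holds, then Past[t⋆, t'] R ℓ' holds (i.e., from whenever a location is reachable and onwards, the value it holds directs traversals only to locations that have been reachable at some point). -/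
/-!
Induct on `t'`, starting from `t`, where single-step compatibility applies. If the write at `t'` is
to another location, the value at `ℓ` is unchanged and the induction hypothesis applies. If it is
to `ℓ`, then either `ℓ` stays reachable throughout `[t, t']`, and single-step compatibility at `t'`
applies, or some write in `(t, t']` makes `ℓ` unreachable; that write must satisfy the second
alternative of the forepassed condition, which covers every write to `ℓ` from then on.
-/

/-- Lemma 5.1 (forepassed lemma). If the reachability predicate `R` is
single-step compatible with the extend relation `E` and every write in the
execution satisfies the forepassed condition, then from whenever a location is
reachable and onwards, the value it holds directs traversals only to locations
that have been reachable at some point. -/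
theorem forepassed_lemma
    {Loc Val : Type*}
    (σ : ℕ → Loc → Val) (wloc : ℕ → Loc) (wval : ℕ → Val)
    (R : (Loc → Val) → Loc → Prop) (E : Loc → Val → Loc → Prop)
    (tstar T : ℕ) (hT : tstar ≤ T)
    -- execution: at each time `t ∈ (tstar, T]` there is a single write `(wloc t, wval t)`
    (hexec : ∀ t, tstar < t → t ≤ T →
      σ t (wloc t) = wval t ∧ ∀ ℓ, ℓ ≠ wloc t → σ t ℓ = σ (t - 1) ℓ)
    -- single-step compatibility of `R` with `E`
    (hssc : ∀ t, tstar ≤ t → t ≤ T → ∀ ℓ ℓ',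
      R (σ t) ℓ → E ℓ (σ t ℓ) ℓ' → R (σ t) ℓ')
    -- every write satisfies the forepassed condition w.r.t. `R` and `E`
    (hfore : ∀ t, tstar < t → t ≤ T → ∀ ℓ,
      (R (σ (t - 1)) ℓ → R (σ t) ℓ) ∨
      (∀ t', t ≤ t' → t' ≤ T → wloc t' = ℓ → ∀ ℓ', E ℓ (wval t') ℓ' →
        ∃ t'', t - 1 ≤ t'' ∧ t'' ≤ t' ∧ R (σ t'') ℓ')) :
    ∀ t t', tstar ≤ t → t ≤ t' → t' ≤ T → ∀ ℓ ℓ',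
      R (σ t) ℓ → E ℓ (σ t' ℓ) ℓ' →
      ∃ t'', tstar ≤ t'' ∧ t'' ≤ t' ∧ R (σ t'') ℓ' := by
  intro t t' ht htt'
  induction t', htt' using Nat.le_induction with
  | base =>
    intro htT ℓ ℓ' hR hE
    exact ⟨t, ht, le_rfl, hssc t ht htT ℓ ℓ' hR hE⟩
  | succ n htn ih =>
    intro hnT ℓ ℓ' hR hE
    obtain ⟨hw, hframe⟩ := hexec (n + 1) (by omega) hnT
    by_cases hℓ : ℓ = wloc (n + 1)
    · have hE' : E ℓ (wval (n + 1)) ℓ' := by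
        rw [← hw, ← hℓ]
        exact hE
      have key : ∀ s, t ≤ s → s ≤ n + 1 →
          R (σ s) ℓ ∨ ∃ t'', tstar ≤ t'' ∧ t'' ≤ n + 1 ∧ R (σ t'') ℓ' := by
        intro s hs
        induction s, hs using Nat.le_induction with
        | base => exact fun _ => Or.inl hR
        | succ m htm ihm =>
          intro hm
          rcases ihm (by omega) with hRm | hpast
          · rcases hfore (m + 1) (by omega) (by omega) ℓ with hkeep | hwrites
            · exact Or.inl (hkeep hRm)
            · obtain ⟨u, hu, hun, hRu⟩ := hwrites (n + 1) hm hnT hℓ.symm ℓ' hE'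
              exact Or.inr ⟨u, by omega, hun, hRu⟩
          · exact Or.inr hpast
      rcases key (n + 1) (by omega) le_rfl with hRn | hpast
      · exact ⟨n + 1, by omega, le_rfl, hssc (n + 1) (by omega) hnT ℓ ℓ' hRn hE⟩
      · exact hpast
    · rw [hframe ℓ hℓ, Nat.add_sub_cancel] at hE
      obtain ⟨u, hu, hun, hRu⟩ := ih (by omega) ℓ ℓ' hR hE
      exact ⟨u, hu, by omega, hRu⟩
end

section
/- Theorem 5.2 (main theorem: traversal correctness). Consider an execution over timespan [t⋆, T] and a traversal τ = (ℓ₁, t₁), …, (ℓ_n, t_n), ℓ_{n+1} w.r.t. the extend relation E, with t⋆ ≤ t₁ and t_n ≤ T, such that R σ_{t⋆} ℓ₁ holds. If the reachability predicate R is single-step compatible with E and every write in the execution satisfies the forepassed condition w.r.t. R and E, then τ is a correct traversal w.r.t. R and base t⋆; that is, Past[t⋆, t_i] R ℓ_{i+1} holds for every i = 0, …, n (with t₀ = t⋆). -/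
/-!
Each traversal step reads `ℓ` at time `t` and moves to `ℓ'`, where by induction `ℓ` was reachable
at some `s ≤ t`; it suffices to show that `ℓ'` was reachable at some time in `[s, t]`
(`past_of_extend`). Push `s` forward as long as the write at `s + 1` satisfies the forepassed
condition for `ℓ` through its first alternative, which keeps `ℓ` reachable. If this gets to `t`,
then single-step compatibility at `t` applies. Otherwise some write at time `s + 1 ≤ t` satisfies
the condition through the second alternative. The value read at
`t` was either present in `ℓ` at time `s`, where single-step compatibility applies, or was written
to `ℓ` during `[s + 1, t]` (`read_eq_or_written`), where the forepassed condition applies.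
-/

/-- A value read from `ℓ` at time `t` was either in `ℓ` at the earlier time `s`, or was written
to `ℓ` in between. -/
theorem read_eq_or_written {Loc Val : Type*}
    (σ : ℕ → Loc → Val) (wloc : ℕ → Loc) (wval : ℕ → Val) (tstar T : ℕ)
    (hexec : ∀ t, tstar < t → t ≤ T →
      σ t (wloc t) = wval t ∧ ∀ ℓ, ℓ ≠ wloc t → σ t ℓ = σ (t - 1) ℓ)
    (ℓ : Loc) {s t : ℕ} (hs : tstar ≤ s) (hst : s ≤ t) (ht : t ≤ T) :
    σ t ℓ = σ s ℓ ∨ ∃ t', s + 1 ≤ t' ∧ t' ≤ t ∧ wloc t' = ℓ ∧ wval t' = σ t ℓ := by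
  induction t, hst using Nat.le_induction with
  | base => exact Or.inl rfl
  | succ t hst ih =>
    obtain ⟨hw, hne⟩ := hexec (t + 1) (by omega) ht
    by_cases hl : ℓ = wloc (t + 1)
    · subst hl
      exact Or.inr ⟨t + 1, by omega, le_rfl, rfl, hw.symm⟩
    · have heq : σ (t + 1) ℓ = σ t ℓ := hne ℓ hl
      rw [heq]
      rcases ih (by omega) with h | ⟨t', h1, h2, h3⟩
      · exact Or.inl h
      · exact Or.inr ⟨t', h1, by omega, h3⟩

/-- Correctness of a single traversal step. -/
theorem past_of_extend {Loc Val : Type*}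
    (σ : ℕ → Loc → Val) (wloc : ℕ → Loc) (wval : ℕ → Val)
    (R : (Loc → Val) → Loc → Prop) (E : Loc → Val → Loc → Prop) (tstar T : ℕ)
    (hexec : ∀ t, tstar < t → t ≤ T →
      σ t (wloc t) = wval t ∧ ∀ ℓ, ℓ ≠ wloc t → σ t ℓ = σ (t - 1) ℓ)
    (hssc : ∀ t, tstar ≤ t → t ≤ T → ∀ ℓ ℓ',
      R (σ t) ℓ → E ℓ (σ t ℓ) ℓ' → R (σ t) ℓ')
    (hfore : ∀ t, tstar < t → t ≤ T → ∀ ℓ,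
      (R (σ (t - 1)) ℓ → R (σ t) ℓ) ∨
      (∀ t', t ≤ t' → t' ≤ T → wloc t' = ℓ → ∀ ℓ', E ℓ (wval t') ℓ' →
        ∃ t'', t - 1 ≤ t'' ∧ t'' ≤ t' ∧ R (σ t'') ℓ'))
    {ℓ ℓ' : Loc} {s t : ℕ} (hs : tstar ≤ s) (hst : s ≤ t) (ht : t ≤ T)
    (hR : R (σ s) ℓ) (hE : E ℓ (σ t ℓ) ℓ') :
    ∃ t'', s ≤ t'' ∧ t'' ≤ t ∧ R (σ t'') ℓ' := by
  rcases hst.eq_or_lt with rfl | hlt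
  · exact ⟨s, le_rfl, le_rfl, hssc s hs ht ℓ ℓ' hR hE⟩
  rcases hfore (s + 1) (by omega) (by omega) ℓ with h | h
  · obtain ⟨u, h1, h2, h3⟩ := past_of_extend σ wloc wval R E tstar T hexec hssc hfore
      (s := s + 1) (by omega) hlt ht (h hR) hE
    exact ⟨u, by omega, h2, h3⟩
  · rcases read_eq_or_written σ wloc wval tstar T hexec ℓ hs hst ht with heq | ⟨t', h1, h2, h3, h4⟩
    · exact ⟨s, le_rfl, hst, hssc s hs (by omega) ℓ ℓ' hR (heq ▸ hE)⟩
    · obtain ⟨u, hu1, hu2, hu3⟩ := h t' h1 (by omega) h3 ℓ' (h4 ▸ hE)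
      exact ⟨u, by omega, by omega, hu3⟩
termination_by t - s

/-- Theorem 5.2 (main theorem: traversal correctness). If `R` is single-step
compatible with `E` and every write satisfies the forepassed condition, then
every traversal `(ℓ₁,t₁),…,(ℓₙ,tₙ),ℓ_{n+1}` whose first location is reachable
at the base time `t⋆` is correct: `Past[t⋆, tᵢ] R ℓ_{i+1}` for `i = 0,…,n`
(with `t₀ = t⋆`). -/
theorem traversal_correctness
    {Loc Val : Type*}
    (σ : ℕ → Loc → Val) (wloc : ℕ → Loc) (wval : ℕ → Val)
    (R : (Loc → Val) → Loc → Prop) (E : Loc → Val → Loc → Prop)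
    (tstar T : ℕ) (hT : tstar ≤ T)
    -- execution: at each time `t ∈ (tstar, T]` there is a single write `(wloc t, wval t)`
    (hexec : ∀ t, tstar < t → t ≤ T →
      σ t (wloc t) = wval t ∧ ∀ ℓ, ℓ ≠ wloc t → σ t ℓ = σ (t - 1) ℓ)
    -- single-step compatibility of `R` with `E`
    (hssc : ∀ t, tstar ≤ t → t ≤ T → ∀ ℓ ℓ',
      R (σ t) ℓ → E ℓ (σ t ℓ) ℓ' → R (σ t) ℓ')
    -- every write satisfies the forepassed condition w.r.t. `R` and `E`
    (hfore : ∀ t, tstar < t → t ≤ T → ∀ ℓ,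
      (R (σ (t - 1)) ℓ → R (σ t) ℓ) ∨
      (∀ t', t ≤ t' → t' ≤ T → wloc t' = ℓ → ∀ ℓ', E ℓ (wval t') ℓ' →
        ∃ t'', t - 1 ≤ t'' ∧ t'' ≤ t' ∧ R (σ t'') ℓ'))
    -- the traversal `(locs 1, ts 1), …, (locs n, ts n), locs (n+1)`, with `ts 0 = t⋆`
    (n : ℕ) (locs : ℕ → Loc) (ts : ℕ → ℕ)
    (hts0 : ts 0 = tstar)
    (hmono : ∀ i, i < n → ts i ≤ ts (i + 1))
    (htn : ts n ≤ T)
    (htrav : ∀ i, 1 ≤ i → i ≤ n → E (locs i) (σ (ts i) (locs i)) (locs (i + 1)))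
    -- the first location is reachable at the base time
    (hbase : R (σ tstar) (locs 1)) :
    ∀ i, i ≤ n → ∃ t'', tstar ≤ t'' ∧ t'' ≤ ts i ∧ R (σ t'') (locs (i + 1)) := by
  have hle : ∀ i, i ≤ n → ts i ≤ T := by
    intro i hi
    induction hi using Nat.decreasingInduction with
    | self => exact htn
    | of_succ k hk ih => exact (hmono k hk).trans ih
  intro i
  induction i with
  | zero => exact fun _ => ⟨tstar, le_rfl, hts0.ge, hbase⟩
  | succ i ih =>
    intro hi
    obtain ⟨s, hs, hsi, hR⟩ := ih (by omega)
    obtain ⟨u, h1, h2, h3⟩ := past_of_extend σ wloc wval R E tstar T hexec hssc hfore hs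
      (hsi.trans (hmono i hi)) (hle _ hi) hR (htrav (i + 1) (by omega) hi)
    exact ⟨u, hs.trans h1, h2, h3⟩
end

section
/- Theorem 5.4 (reachability together with a field). Fix locations ℓ and f. Consider an execution over timespan [t⋆, T]. If t and t' satisfy t⋆ ≤ t ≤ t' ≤ T, R σ_t ℓ holds, σ_{t'} f = v, and every write in the execution satisfies the forepassed condition w.r.t. ℓ and f, then there exists t'' with t ≤ t'' ≤ t' such that R σ_{t''} ℓ holds and σ_{t''} f = v (i.e., at some single intermediate state, ℓ is reachable and f simultaneously holds the value v). -/
/-!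
Follow time forward from `t`. As long as every write so far satisfies condition (1), `ℓ` stays
reachable; once a write violates it, condition (2) says that `f` is never modified again. Hence `ℓ`
is reachable right after each modification of `f`, and the last such modification up to `t'` (or
`t` itself if there is none) is a state where `ℓ` is reachable and `f` has its value at `t'`.
The proof is an induction on `t'` with the invariant that `ℓ` is reachable or `f` is frozen.
-/

/-- Theorem 5.4 (reachability together with a field). If `ℓ` is reachable at
time `t`, the field `f` holds value `v` at time `t' ≥ t`, and every write
satisfies the forepassed condition w.r.t. `ℓ` and `f`, then at some single
intermediate state `ℓ` is reachable and `f` simultaneously holds `v`. -/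
theorem reachability_with_field
    {Loc Val : Type*}
    (σ : ℕ → Loc → Val) (wloc : ℕ → Loc) (wval : ℕ → Val)
    (R : (Loc → Val) → Loc → Prop)
    (tstar T : ℕ) (hT : tstar ≤ T)
    -- execution: at each time `t ∈ (tstar, T]` there is a single write `(wloc t, wval t)`
    (hexec : ∀ t, tstar < t → t ≤ T →
      σ t (wloc t) = wval t ∧ ∀ ℓ', ℓ' ≠ wloc t → σ t ℓ' = σ (t - 1) ℓ')
    (ℓ f : Loc) (v : Val)
    -- every write satisfies the forepassed condition w.r.t. `ℓ` and `f`
    (hfore : ∀ t, tstar < t → t ≤ T →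
      (R (σ (t - 1)) ℓ → R (σ t) ℓ) ∨
      (∀ s, t ≤ s → s ≤ T → ¬(wloc s = f ∧ σ s f ≠ σ (s - 1) f)))
    (t t' : ℕ) (h1 : tstar ≤ t) (h2 : t ≤ t') (h3 : t' ≤ T)
    (hreach : R (σ t) ℓ) (hfield : σ t' f = v) :
    ∃ t'', t ≤ t'' ∧ t'' ≤ t' ∧ R (σ t'') ℓ ∧ σ t'' f = v := by
  subst hfield
  -- Either `ℓ` is still reachable at time `t'`, or some write up to `t'` made it unreachable;
  -- in the latter case condition (2) freezes `f` from `t'` on.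
  suffices key : (R (σ t') ℓ ∨ ∀ s, t' ≤ s → s ≤ T → ¬(wloc s = f ∧ σ s f ≠ σ (s - 1) f)) ∧
      ∃ t'', t ≤ t'' ∧ t'' ≤ t' ∧ R (σ t'') ℓ ∧ σ t'' f = σ t' f from key.2
  induction t', h2 using Nat.le_induction with
  | base => exact ⟨Or.inl hreach, t, le_rfl, le_rfl, hreach, rfl⟩
  | succ n hn ih =>
    obtain ⟨hinv, t'', ha, hb, hc, hd⟩ := ih (by omega)
    have hinv' : R (σ (n + 1)) ℓ ∨
        ∀ s, n + 1 ≤ s → s ≤ T → ¬(wloc s = f ∧ σ s f ≠ σ (s - 1) f) := by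
      rcases hinv with hR | hfrozen
      · exact (hfore (n + 1) (by omega) h3).imp_left fun h => h hR
      · exact Or.inr fun s hs => hfrozen s (by omega)
    refine ⟨hinv', ?_⟩
    by_cases hmod : σ (n + 1) f = σ n f
    · exact ⟨t'', ha, by omega, hc, hd.trans hmod.symm⟩
    -- Otherwise the write at `n + 1` modifies `f`, so `f` is not frozen and `ℓ` is reachable.
    · have hw : wloc (n + 1) = f := by
        by_contra hne
        exact hmod ((hexec (n + 1) (by omega) h3).2 f (Ne.symm hne))
      rcases hinv' with hR | hfrozen
      · exact ⟨n + 1, by omega, le_rfl, hR, rfl⟩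
      · exact absurd ⟨hw, hmod⟩ (hfrozen (n + 1) le_rfl h3)
end

section
/- Strong forepassed implies forepassed under single-step compatibility. Suppose the reachability predicate R is single-step compatible with the extend relation E. If the write at time t ∈ (t⋆, T] satisfies the strong forepassed condition w.r.t. R, then it satisfies the forepassed condition w.r.t. R and E (i.e., condition (3) of the strong forepassed condition is a special case of condition (2) of the forepassed condition in the presence of single-step compatibility). -/
/-!
If `ℓ` falls under condition (3) but not under condition (1), then `ℓ` is reachable at time `t - 1`
and keeps its value from `t - 1` through `T`. Every later write to `ℓ` therefore writes the value
`σ (t - 1) ℓ`, so single-step compatibility at time `t - 1` makes each `E`-successor of `ℓ`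
reachable at time `t - 1`, which witnesses condition (2).
-/

/-- Strong forepassed implies forepassed under single-step compatibility:
if `R` is single-step compatible with `E` and the write at time
`t ∈ (t⋆, T]` satisfies the strong forepassed condition w.r.t. `R`, then it
satisfies the forepassed condition w.r.t. `R` and `E`. -/
theorem strong_forepassed_implies_forepassed
    {Loc Val : Type*}
    (σ : ℕ → Loc → Val) (wloc : ℕ → Loc) (wval : ℕ → Val)
    (R : (Loc → Val) → Loc → Prop) (E : Loc → Val → Loc → Prop)
    (tstar T : ℕ) (hT : tstar ≤ T)
    -- execution: at each time `t ∈ (tstar, T]` there is a single write `(wloc t, wval t)`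
    (hexec : ∀ t, tstar < t → t ≤ T →
      σ t (wloc t) = wval t ∧ ∀ ℓ, ℓ ≠ wloc t → σ t ℓ = σ (t - 1) ℓ)
    -- single-step compatibility of `R` with `E`
    (hssc : ∀ t, tstar ≤ t → t ≤ T → ∀ ℓ ℓ',
      R (σ t) ℓ → E ℓ (σ t ℓ) ℓ' → R (σ t) ℓ')
    (t : ℕ) (ht1 : tstar < t) (ht2 : t ≤ T)
    -- the write at time `t` satisfies the strong forepassed condition w.r.t. `R`
    (hstrong : ∀ ℓ,
      (R (σ (t - 1)) ℓ → R (σ t) ℓ) ∨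
      (∀ s, t ≤ s → s ≤ T → ¬(wloc s = ℓ ∧ σ s ℓ ≠ σ (s - 1) ℓ))) :
    -- the write at time `t` satisfies the forepassed condition w.r.t. `R` and `E`
    ∀ ℓ,
      (R (σ (t - 1)) ℓ → R (σ t) ℓ) ∨
      (∀ t', t ≤ t' → t' ≤ T → wloc t' = ℓ → ∀ ℓ', E ℓ (wval t') ℓ' →
        ∃ t'', t - 1 ≤ t'' ∧ t'' ≤ t' ∧ R (σ t'') ℓ') := by
  intro ℓ
  by_cases hR : R (σ (t - 1)) ℓ → R (σ t) ℓ
  · exact Or.inl hR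
  have hnomod := (hstrong ℓ).resolve_left hR
  -- Since (1) fails, `ℓ` is reachable at time `t - 1`; this is the witness for every later write.
  have hreach : R (σ (t - 1)) ℓ := by
    by_contra h
    exact hR fun h' => absurd h' h
  have hconst : ∀ s, t - 1 ≤ s → s ≤ T → σ s ℓ = σ (t - 1) ℓ := by
    intro s hs
    induction s, hs using Nat.le_induction with
    | base => intro _; rfl
    | succ s hs ih =>
      intro hsT
      rw [← ih (by omega)]
      by_cases hw : wloc (s + 1) = ℓ
      · by_contra hne
        exact hnomod (s + 1) (by omega) hsT ⟨hw, hne⟩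
      · exact (hexec (s + 1) (by omega) hsT).2 ℓ (Ne.symm hw)
  refine Or.inr fun t' ht ht' hw ℓ' hE => ⟨t - 1, le_rfl, by omega, ?_⟩
  -- A non-modifying write to `ℓ` writes the value that `ℓ` already held at time `t - 1`.
  have hval : wval t' = σ (t - 1) ℓ := by
    rw [← hconst t' (by omega) ht', ← (hexec t' (by omega) ht').1, hw]
  exact hssc (t - 1) (by omega) (by omega) ℓ ℓ' hreach (hval ▸ hE)
end

section
/- Corollary of the main theorem for the strong forepassed condition. Consider an execution over timespan [t⋆, T] and a traversal τ = (ℓ₁, t₁), …, (ℓ_n, t_n), ℓ_{n+1} w.r.t. the extend relation E, with t⋆ ≤ t₁ and t_n ≤ T, such that R σ_{t⋆} ℓ₁ holds. If the reachability predicate R is single-step compatible with E and every write in the execution satisfies the strong forepassed condition w.r.t. R, then τ is a correct traversal w.r.t. R and base t⋆; that is, Past[t⋆, t_i] R ℓ_{i+1} holds for every i = 0, …, n (with t₀ = t⋆). -/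
/-!
If `ℓ` is reachable at some time `a`, then at every later time `b` the value stored in `ℓ` is one
that `ℓ` held at some `c ∈ [a, b]` at which it was reachable (`exists_reachable_same_value`):
the strong forepassed condition says that the first write destroying reachability of `ℓ` comes
after the last modification of `ℓ`. So an edge read at time `t_i` already existed at a time `c`
when its source was reachable, and single-step compatibility at `c` makes its target reachable
at `c`. The theorem follows by induction along the traversal.
-/

/-- The value of `ℓ` at time `b` was already its value at some time `c ∈ [a, b]` at which `ℓ` was
reachable. -/
theorem exists_reachable_same_value {Loc Val : Type*}
    (σ : ℕ → Loc → Val) (wloc : ℕ → Loc) (R : (Loc → Val) → Loc → Prop) (tstar T : ℕ)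
    (hframe : ∀ t, tstar < t → t ≤ T → ∀ ℓ, ℓ ≠ wloc t → σ t ℓ = σ (t - 1) ℓ)
    (hstrong : ∀ t, tstar < t → t ≤ T → ∀ ℓ,
      (R (σ (t - 1)) ℓ → R (σ t) ℓ) ∨
      (∀ s, t ≤ s → s ≤ T → ¬(wloc s = ℓ ∧ σ s ℓ ≠ σ (s - 1) ℓ)))
    (ℓ : Loc) (a b : ℕ) (ha : tstar ≤ a) (hab : a ≤ b) (hb : b ≤ T) (hR : R (σ a) ℓ) :
    ∃ c, a ≤ c ∧ c ≤ b ∧ R (σ c) ℓ ∧ σ c ℓ = σ b ℓ := by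
  -- Strengthened for the induction: either `c = b`, or `ℓ` is never modified after time `b`.
  suffices h : ∃ c, a ≤ c ∧ c ≤ b ∧ R (σ c) ℓ ∧ σ c ℓ = σ b ℓ ∧
      (c = b ∨ ∀ s, b < s → s ≤ T → σ s ℓ = σ (s - 1) ℓ) by
    obtain ⟨c, h1, h2, h3, h4, -⟩ := h
    exact ⟨c, h1, h2, h3, h4⟩
  induction b, hab using Nat.le_induction with
  | base => exact ⟨a, le_rfl, le_rfl, hR, rfl, Or.inl rfl⟩
  | succ b hab ih =>
    obtain ⟨c, hac, hcb, hRc, hval, hc⟩ := ih (by omega)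
    rcases hc with rfl | hfix
    · rcases hstrong (c + 1) (by omega) hb ℓ with hpres | hnomod
      · exact ⟨c + 1, by omega, le_rfl, hpres hRc, rfl, Or.inl rfl⟩
      · have hfix : ∀ s, c < s → s ≤ T → σ s ℓ = σ (s - 1) ℓ := by
          intro s hs hsT
          by_contra hne
          by_cases hw : wloc s = ℓ
          · exact hnomod s hs hsT ⟨hw, hne⟩
          · exact hne (hframe s (by omega) hsT ℓ (Ne.symm hw))
        exact ⟨c, hac, by omega, hRc, (hfix (c + 1) (by omega) hb).symm,
          Or.inr fun s hs => hfix s (by omega)⟩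
    · exact ⟨c, hac, by omega, hRc, hval.trans (hfix (b + 1) (by omega) hb).symm,
        Or.inr fun s hs => hfix s (by omega)⟩

/-- Corollary of the main theorem for the strong forepassed condition:
if `R` is single-step compatible with `E` and every write in the execution
satisfies the strong forepassed condition w.r.t. `R`, then every traversal
whose first location is reachable at the base time `t⋆` is correct:
`Past[t⋆, tᵢ] R ℓ_{i+1}` for `i = 0,…,n` (with `t₀ = t⋆`). -/
theorem traversal_correctness_strong_forepassed
    {Loc Val : Type*}
    (σ : ℕ → Loc → Val) (wloc : ℕ → Loc) (wval : ℕ → Val)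
    (R : (Loc → Val) → Loc → Prop) (E : Loc → Val → Loc → Prop)
    (tstar T : ℕ) (hT : tstar ≤ T)
    -- execution: at each time `t ∈ (tstar, T]` there is a single write `(wloc t, wval t)`
    (hexec : ∀ t, tstar < t → t ≤ T →
      σ t (wloc t) = wval t ∧ ∀ ℓ, ℓ ≠ wloc t → σ t ℓ = σ (t - 1) ℓ)
    -- single-step compatibility of `R` with `E`
    (hssc : ∀ t, tstar ≤ t → t ≤ T → ∀ ℓ ℓ',
      R (σ t) ℓ → E ℓ (σ t ℓ) ℓ' → R (σ t) ℓ')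
    -- every write satisfies the strong forepassed condition w.r.t. `R`
    (hstrong : ∀ t, tstar < t → t ≤ T → ∀ ℓ,
      (R (σ (t - 1)) ℓ → R (σ t) ℓ) ∨
      (∀ s, t ≤ s → s ≤ T → ¬(wloc s = ℓ ∧ σ s ℓ ≠ σ (s - 1) ℓ)))
    -- the traversal `(locs 1, ts 1), …, (locs n, ts n), locs (n+1)`, with `ts 0 = t⋆`
    (n : ℕ) (locs : ℕ → Loc) (ts : ℕ → ℕ)
    (hts0 : ts 0 = tstar)
    (hmono : ∀ i, i < n → ts i ≤ ts (i + 1))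
    (htn : ts n ≤ T)
    (htrav : ∀ i, 1 ≤ i → i ≤ n → E (locs i) (σ (ts i) (locs i)) (locs (i + 1)))
    -- the first location is reachable at the base time
    (hbase : R (σ tstar) (locs 1)) :
    ∀ i, i ≤ n → ∃ t'', tstar ≤ t'' ∧ t'' ≤ ts i ∧ R (σ t'') (locs (i + 1)) := by
  have htsT : ∀ i, i ≤ n → ts i ≤ T := by
    intro i hi
    induction hi using Nat.decreasingInduction with
    | self => exact htn
    | of_succ k hk ih => exact (hmono k hk).trans ih
  intro i
  induction i with
  | zero => exact fun _ => ⟨tstar, le_rfl, hts0.ge, hbase⟩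
  | succ i ih =>
    intro hi
    obtain ⟨a, ha, hai, hR⟩ := ih (by omega)
    have hle := hmono i (by omega)
    have hiT := htsT (i + 1) hi
    obtain ⟨c, hac, hcb, hRc, hval⟩ := exists_reachable_same_value σ wloc R tstar T
      (fun t h1 h2 => (hexec t h1 h2).2) hstrong (locs (i + 1)) a (ts (i + 1)) ha
      (hai.trans hle) hiT hR
    have hE := htrav (i + 1) (by omega) hi
    rw [← hval] at hE
    exact ⟨c, ha.trans hac, hcb, hssc c (by omega) (by omega) _ _ hRc hE⟩
end

section
/- Induction step of the main theorem (past-reachability is propagated along extend steps). Consider an execution over timespan [t⋆, T] in which the reachability predicate R is single-step compatible with the extend relation E and every write satisfies the forepassed condition w.r.t. R and E. Then for all times t, t' with t⋆ ≤ t ≤ t' ≤ T and all locations ℓ, ℓ': if Past[t⋆, t] R ℓ holds and E ℓ (σ_{t'} ℓ) ℓ' holds, then Past[t⋆, t'] R ℓ' holds. -/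
/-!
Suppose `ℓ` is reachable at time `s`, and argue by induction on the later time `n` at which the
extend step from `ℓ` to `ℓ'` is taken. If `n = s`, single-step compatibility applies. If the last
write is not to `ℓ`, then `ℓ` has the same value one step earlier. Otherwise the last write is to
`ℓ`: either `ℓ` is still reachable at that time, and single-step compatibility applies again, or
some write at a time `u ∈ (s, n]` made `ℓ` unreachable (`exists_step_lost`). The forepassed
condition of that write holds through its second alternative, and covers the write at time `n`.
-/

/-- A property of times that holds at `s` and fails at `n ≥ s` is lost at some step in `(s, n]`. -/
theorem exists_step_lost {P : ℕ → Prop} {s n : ℕ} (hsn : s ≤ n) (hs : P s) (hn : ¬ P n) :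
    ∃ u, s < u ∧ u ≤ n ∧ P (u - 1) ∧ ¬ P u := by
  induction n, hsn using Nat.le_induction with
  | base => exact absurd hs hn
  | succ n hsn ih =>
    by_cases h : P n
    · exact ⟨n + 1, by omega, le_rfl, h, hn⟩
    · obtain ⟨u, hu, hun, hP⟩ := ih h
      exact ⟨u, hu, by omega, hP⟩

/-- Induction step of the main theorem (past-reachability is propagated along
extend steps): under single-step compatibility and the forepassed condition,
if `Past[t⋆, t] R ℓ` and `E ℓ (σ_{t'} ℓ) ℓ'` for `t ≤ t'`, then
`Past[t⋆, t'] R ℓ'`. -/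
theorem past_reachability_propagation
    {Loc Val : Type*}
    (σ : ℕ → Loc → Val) (wloc : ℕ → Loc) (wval : ℕ → Val)
    (R : (Loc → Val) → Loc → Prop) (E : Loc → Val → Loc → Prop)
    (tstar T : ℕ) (hT : tstar ≤ T)
    -- execution: at each time `t ∈ (tstar, T]` there is a single write `(wloc t, wval t)`
    (hexec : ∀ t, tstar < t → t ≤ T →
      σ t (wloc t) = wval t ∧ ∀ ℓ, ℓ ≠ wloc t → σ t ℓ = σ (t - 1) ℓ)
    -- single-step compatibility of `R` with `E`
    (hssc : ∀ t, tstar ≤ t → t ≤ T → ∀ ℓ ℓ',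
      R (σ t) ℓ → E ℓ (σ t ℓ) ℓ' → R (σ t) ℓ')
    -- every write satisfies the forepassed condition w.r.t. `R` and `E`
    (hfore : ∀ t, tstar < t → t ≤ T → ∀ ℓ,
      (R (σ (t - 1)) ℓ → R (σ t) ℓ) ∨
      (∀ t', t ≤ t' → t' ≤ T → wloc t' = ℓ → ∀ ℓ', E ℓ (wval t') ℓ' →
        ∃ t'', t - 1 ≤ t'' ∧ t'' ≤ t' ∧ R (σ t'') ℓ')) :
    ∀ t t', tstar ≤ t → t ≤ t' → t' ≤ T → ∀ ℓ ℓ',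
      (∃ t'', tstar ≤ t'' ∧ t'' ≤ t ∧ R (σ t'') ℓ) →
      E ℓ (σ t' ℓ) ℓ' →
      ∃ t'', tstar ≤ t'' ∧ t'' ≤ t' ∧ R (σ t'') ℓ' := by
  rintro t t' - htt' ht'T ℓ ℓ' ⟨s, hs, hst, hR⟩ hE
  have hst' : s ≤ t' := hst.trans htt'
  clear htt'
  induction t', hst' using Nat.le_induction with
  | base => exact ⟨s, hs, le_rfl, hssc s hs ht'T ℓ ℓ' hR hE⟩
  | succ n hsn ih =>
    obtain ⟨hw, hkeep⟩ := hexec (n + 1) (by omega) ht'T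
    by_cases hℓ : ℓ = wloc (n + 1)
    · by_cases hRn : R (σ (n + 1)) ℓ
      · exact ⟨n + 1, by omega, le_rfl, hssc (n + 1) (by omega) ht'T ℓ ℓ' hRn hE⟩
      · obtain ⟨u, hsu, hun, hbefore, hafter⟩ :=
          exists_step_lost (P := fun k => R (σ k) ℓ) (by omega : s ≤ n + 1) hR hRn
        rcases hfore u (by omega) (by omega) ℓ with h | h
        · exact absurd (h hbefore) hafter
        · obtain ⟨r, hur, hrn, hRr⟩ :=
            h (n + 1) hun ht'T hℓ.symm ℓ' (by rw [← hw, ← hℓ]; exact hE)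
          exact ⟨r, by omega, hrn, hRr⟩
    · have hE' : E ℓ (σ n ℓ) ℓ' := by simpa [hkeep ℓ hℓ] using hE
      obtain ⟨r, hr, hrn, hRr⟩ := ih (by omega) hE'
      exact ⟨r, hr, by omega, hRr⟩
end

section
/- Current-state traversal correctness when no write ever reduces reachability. Consider an execution over timespan [t⋆, T] in which the reachability predicate R is single-step compatible with the extend relation E and no write reduces the reachability of any location (i.e., for every t ∈ (t⋆, T] and every location ℓ, R σ_{t-1} ℓ implies R σ_t ℓ). Let (ℓ₁, t₁), …, (ℓ_n, t_n), ℓ_{n+1} be a traversal w.r.t. E with R σ_{t⋆} ℓ₁. Then R σ_{t_i} ℓ_i and R σ_{t_i} ℓ_{i+1} hold for every i = 1, …, n; in particular every location reached by the traversal is reachable at the very moment it is reached. -/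
/-!
Since no write reduces reachability, a location reachable at time `a` stays reachable at every
later time `b` of the timespan. Induction along the traversal then suffices: `locs (i + 1)` is
reachable at time `ts i`, hence still at time `ts (i + 1)`, and single-step compatibility at that
time makes `locs (i + 2)` reachable.
-/

/-- Current-state traversal correctness when no write ever reduces
reachability: if `R` is single-step compatible with `E` and no write reduces
the reachability of any location, then every location reached by a traversal
(whose first location is reachable at the base time) is reachable at the very
moment it is reached. -/
theorem current_state_traversal_correctness
    {Loc Val : Type*}
    (σ : ℕ → Loc → Val) (wloc : ℕ → Loc) (wval : ℕ → Val)
    (R : (Loc → Val) → Loc → Prop) (E : Loc → Val → Loc → Prop)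
    (tstar T : ℕ) (hT : tstar ≤ T)
    -- execution: at each time `t ∈ (tstar, T]` there is a single write `(wloc t, wval t)`
    (hexec : ∀ t, tstar < t → t ≤ T →
      σ t (wloc t) = wval t ∧ ∀ ℓ, ℓ ≠ wloc t → σ t ℓ = σ (t - 1) ℓ)
    -- single-step compatibility of `R` with `E`
    (hssc : ∀ t, tstar ≤ t → t ≤ T → ∀ ℓ ℓ',
      R (σ t) ℓ → E ℓ (σ t ℓ) ℓ' → R (σ t) ℓ')
    -- no write reduces the reachability of any location
    (hnored : ∀ t, tstar < t → t ≤ T → ∀ ℓ, R (σ (t - 1)) ℓ → R (σ t) ℓ)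
    -- the traversal `(locs 1, ts 1), …, (locs n, ts n), locs (n+1)`
    (n : ℕ) (locs : ℕ → Loc) (ts : ℕ → ℕ)
    (ht1 : tstar ≤ ts 1)
    (hmono : ∀ i, 1 ≤ i → i < n → ts i ≤ ts (i + 1))
    (htn : ts n ≤ T)
    (htrav : ∀ i, 1 ≤ i → i ≤ n → E (locs i) (σ (ts i) (locs i)) (locs (i + 1)))
    -- the first location is reachable at the base time
    (hbase : R (σ tstar) (locs 1)) :
    ∀ i, 1 ≤ i → i ≤ n →
      R (σ (ts i)) (locs i) ∧ R (σ (ts i)) (locs (i + 1)) := by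
  have persist : ∀ a b, tstar ≤ a → a ≤ b → b ≤ T → ∀ ℓ, R (σ a) ℓ → R (σ b) ℓ := by
    intro a b ha hab
    induction b, hab using Nat.le_induction with
    | base => exact fun _ _ h => h
    | succ b hab ih =>
      intro hb ℓ h
      exact hnored (b + 1) (by omega) hb ℓ (ih (by omega) ℓ h)
  have upper : ∀ i, 1 ≤ i → i ≤ n → ts i ≤ T := by
    intro i hi hin
    induction hin using Nat.decreasingInduction with
    | self => exact htn
    | of_succ k hk ih => exact (hmono k hi hk).trans (ih (by omega))
  have lower : ∀ i, 1 ≤ i → i ≤ n → tstar ≤ ts i := by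
    intro i hi
    induction i, hi using Nat.le_induction with
    | base => exact fun _ => ht1
    | succ k hk ih => exact fun hkn => (ih (by omega)).trans (hmono k hk hkn)
  have extend : ∀ i, 1 ≤ i → i ≤ n → R (σ (ts i)) (locs i) →
      R (σ (ts i)) (locs i) ∧ R (σ (ts i)) (locs (i + 1)) := fun i hi hin h =>
    ⟨h, hssc _ (lower i hi hin) (upper i hi hin) _ _ h (htrav i hi hin)⟩
  intro i hi
  induction i, hi using Nat.le_induction with
  | base =>
    intro hn
    exact extend 1 le_rfl hn (persist tstar (ts 1) le_rfl ht1 (upper 1 le_rfl hn) _ hbase)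
  | succ k hk ih =>
    intro hkn
    have hkn' : k ≤ n := by omega
    exact extend (k + 1) (by omega) hkn
      (persist (ts k) (ts (k + 1)) (lower k hk hkn') (hmono k hk hkn)
        (upper (k + 1) (by omega) hkn) _ (ih hkn').2)
end
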